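/- Let α > 0. For all λ, x ∈ ℝ, the Hartley–Bessel kernel satisfies the uniform bound |J_λ(x, α)| ≤ √2. -/

import Mathlib

open MeasureTheory ENNReal

/-- Normalized Bessel function of the first kind of index `a`:
`B_a(x) = ∑ (-1)^n / (n! (a+1)_n) (x/2)^{2n}`. -/
noncomputable def HBbessel (a : ℝ) (x : ℝ) : ℝ :=
  ∑' n : ℕ, ((-1 : ℝ) ^ n / ((n.factorial : ℝ) * (ascPochhammer ℝ n).eval (a + 1)))
      * (x / 2) ^ (2 * n)

/-- Hartley–Bessel kernel `J_λ(x, a)`. -/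
noncomputable def HBkernel (lam x a : ℝ) : ℝ :=
  HBbessel (a - 1/2) (lam * x) + (lam * x / (2 * a + 1)) * HBbessel (a + 1/2) (lam * x)

/-- Weighted measure `μ_a` with density `|x|^{2a} / (2^{a+1/2} Γ(a+1/2))`. -/
noncomputable def HBmeasure (a : ℝ) : Measure ℝ :=
  (volume : Measure ℝ).withDensity fun x =>
    ENNReal.ofReal (|x| ^ (2 * a) / (2 ^ (a + 1/2) * Real.Gamma (a + 1/2)))

/-- Hartley–Bessel transform `H_a[f](λ) = ∫ J_λ(x,a) f(x) dμ_a(x)`. -/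
noncomputable def HBtransform (a : ℝ) (f : ℝ → ℝ) (lam : ℝ) : ℝ :=
  ∫ x, HBkernel lam x a * f x ∂(HBmeasure a)

noncomputable def HBc (s : ℝ) (n : ℕ) : ℝ :=
  (-1 : ℝ) ^ n / ((n.factorial : ℝ) * (ascPochhammer ℝ n).eval s)

noncomputable def HBP (s t : ℝ) : ℝ := ∑' n : ℕ, HBc s n * t ^ n

lemma HB_poch_lower (s : ℝ) (hs : 1/2 < s) (n : ℕ) :
    (1/4 : ℝ) ^ n ≤ (1/2 : ℝ) ^ n ∧ (1/2 : ℝ) ^ n ≤ (ascPochhammer ℝ n).eval s := by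
  refine ⟨by gcongr; norm_num, ?_⟩
  induction n with
  | zero => simp
  | succ n ih =>
    rw [ascPochhammer_succ_eval, pow_succ]
    have : (0:ℝ) ≤ n := Nat.cast_nonneg n
    gcongr
    · exact le_trans (by positivity) ih
    · linarith

lemma HB_poch_shift (s : ℝ) (n : ℕ) :
    s * (ascPochhammer ℝ n).eval (s + 1) = (ascPochhammer ℝ n).eval s * (s + n) := by
  rw [← ascPochhammer_succ_eval, ascPochhammer_succ_left]
  simp [Polynomial.eval_comp]

lemma HBc_bound (s : ℝ) (hs : 1/2 < s) (n : ℕ) : |HBc s n| ≤ 2 ^ n / (n.factorial : ℝ) := by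
  have h := (HB_poch_lower s hs n).2
  have h0 : (0:ℝ) < (1/2) ^ n := by positivity
  have h1 := lt_of_lt_of_le h0 h
  have hf : (0:ℝ) < n.factorial := by positivity
  unfold HBc
  rw [abs_div, abs_pow, abs_neg, abs_one, one_pow, abs_of_pos (mul_pos hf h1)]
  rw [div_le_div_iff₀ (mul_pos hf h1) hf]
  have : (1:ℝ) = 2 ^ n * (1/2) ^ n := by rw [← mul_pow]; norm_num
  calc 1 * (n.factorial : ℝ) = 2 ^ n * (n.factorial * (1/2) ^ n) := by
        rw [show (2:ℝ) ^ n * (n.factorial * (1/2) ^ n) = (2 ^ n * (1/2) ^ n) * n.factorial by ring,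
          ← this]
    _ ≤ _ := by gcongr

lemma HB_summable (s : ℝ) (hs : 1/2 < s) (t : ℝ) : Summable fun n => HBc s n * t ^ n := by
  refine Summable.of_norm_bounded (Real.summable_pow_div_factorial (2 * |t|)) fun n => ?_
  rw [Real.norm_eq_abs, abs_mul, abs_pow, mul_pow, mul_div_right_comm]
  gcongr
  exact HBc_bound s hs n

lemma HB_u_summable (R : ℝ) :
    Summable fun n : ℕ => 2 ^ n / (n.factorial : ℝ) * (n * R ^ (n - 1)) := by
  rw [← summable_nat_add_iff 1]
  refine ((Real.summable_pow_div_factorial (2 * R)).mul_left 2).congr fun n => ?_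
  rw [Nat.factorial_succ]
  push_cast
  have : (n : ℝ) + 1 ≠ 0 := by positivity
  field_simp
  ring

lemma HB_term_bound (s : ℝ) (hs : 1/2 < s) (R t : ℝ) (ht : |t| ≤ R) (n : ℕ) :
    ‖HBc s n * (n * t ^ (n - 1))‖ ≤ 2 ^ n / (n.factorial : ℝ) * (n * R ^ (n - 1)) := by
  rw [Real.norm_eq_abs, abs_mul, abs_mul, abs_pow, Nat.abs_cast]
  gcongr
  exact HBc_bound s hs n

lemma HB_dsummable (s : ℝ) (hs : 1/2 < s) (t : ℝ) :
    Summable fun n : ℕ => HBc s n * (n * t ^ (n - 1)) :=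
  Summable.of_norm_bounded (HB_u_summable |t|) fun n => HB_term_bound s hs _ t le_rfl n

lemma HB_hasDeriv (s : ℝ) (hs : 1/2 < s) (t : ℝ) :
    HasDerivAt (HBP s) (∑' n : ℕ, HBc s n * (n * t ^ (n - 1))) t := by
  refine hasDerivAt_tsum_of_isPreconnected (HB_u_summable (|t| + 1))
    (t := Metric.ball (0:ℝ) (|t| + 1)) (y₀ := 0) Metric.isOpen_ball
    (convex_ball _ _).isPreconnected (fun n y _ => (hasDerivAt_pow n y).const_mul _)
    (fun n y hy => HB_term_bound s hs _ y ?_ n) ?_ (HB_summable s hs 0) ?_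
  · simpa using (Metric.mem_ball.1 hy).le
  · simp; positivity
  · simp

lemma HB_d1 (s : ℝ) (hs : 1/2 < s) (t : ℝ) :
    (∑' n : ℕ, HBc s n * (n * t ^ (n - 1))) = -(1/s) * HBP (s+1) t := by
  rw [(HB_dsummable s hs t).tsum_eq_zero_add, HBP, ← tsum_mul_left]
  simp only [Nat.cast_zero, zero_mul, mul_zero, zero_add, Nat.add_sub_cancel]
  refine tsum_congr fun n => ?_
  unfold HBc
  have h0 : (0:ℝ) < (1/2) ^ n := by positivity
  have h1 := lt_of_lt_of_le h0 (HB_poch_lower (s+1) (by linarith) n).2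
  have hs0 : s ≠ 0 := by linarith
  have hn : (n : ℝ) + 1 ≠ 0 := by positivity
  rw [ascPochhammer_succ_eval, ← HB_poch_shift, Nat.factorial_succ]
  push_cast
  have := h1.ne'
  field_simp
  ring

lemma HB_d2 (s : ℝ) (hs : 1/2 < s) (t : ℝ) :
    t * (∑' n : ℕ, HBc (s+1) n * (n * t ^ (n - 1))) = s * HBP s t - s * HBP (s+1) t := by
  have hs' : 1/2 < s + 1 := by linarith
  unfold HBP
  rw [← tsum_mul_left, ← tsum_mul_left, ← tsum_mul_left,
    ← ((HB_summable s hs t).mul_left s).tsum_sub ((HB_summable (s+1) hs' t).mul_left s)]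
  refine tsum_congr fun n => ?_
  have key : s * HBc s n = (n + s) * HBc (s+1) n := by
    have h0 : (0:ℝ) < (1/2) ^ n := by positivity
    have h1 := (lt_of_lt_of_le h0 (HB_poch_lower (s+1) hs' n).2).ne'
    have h2 := (lt_of_lt_of_le h0 (HB_poch_lower s hs n).2).ne'
    have := HB_poch_shift s n
    unfold HBc
    field_simp
    linear_combination this
  rcases n with _ | n
  · simp only [Nat.cast_zero, zero_add, pow_zero, zero_mul, mul_zero, mul_one] at key ⊢
    linear_combination -key
  · simp only [Nat.add_sub_cancel]
    rw [pow_succ]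
    linear_combination -(t ^ n * t) * key

lemma HBP_zero (s : ℝ) : HBP s 0 = 1 := by
  unfold HBP
  rw [tsum_eq_single 0]
  · simp [HBc]
  · intro n hn; simp [hn]

lemma HB_energy (s : ℝ) (hs : 1/2 < s) (t : ℝ) (ht : 0 ≤ t) :
    HBP s t ^ 2 + t / s ^ 2 * HBP (s+1) t ^ 2 ≤ 1 := by
  have hs0 : s ≠ 0 := by linarith
  have hD : ∀ t, HasDerivAt (fun t => HBP s t ^ 2 + t / s ^ 2 * HBP (s+1) t ^ 2)
      (HBP (s+1) t ^ 2 * (1 - 2 * s) / s ^ 2) t := by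
    intro t
    have h1 := HB_hasDeriv s hs t
    have h2 := HB_hasDeriv (s+1) (by linarith) t
    have e2 := HB_d2 s hs t
    rw [HB_d1 s hs t] at h1
    refine ((h1.pow 2).add (((hasDerivAt_id t).div_const (s^2)).mul (h2.pow 2))).congr_deriv ?_
    generalize (∑' n : ℕ, HBc (s+1) n * (n * t ^ (n - 1))) = D at *
    simp
    field_simp
    linear_combination (2 * HBP (s+1) t) * e2
  have hA : Antitone (fun t => HBP s t ^ 2 + t / s ^ 2 * HBP (s+1) t ^ 2) := by
    refine antitone_of_deriv_nonpos (fun t => (hD t).differentiableAt) fun t => ?_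
    rw [(hD t).deriv]
    refine div_nonpos_of_nonpos_of_nonneg ?_ (by positivity)
    exact mul_nonpos_of_nonneg_of_nonpos (by positivity) (by linarith)
  have := hA ht
  simpa [HBP_zero] using this

lemma HBbessel_eq (b y : ℝ) : HBbessel b y = HBP (b + 1) ((y / 2) ^ 2) := by
  simp only [HBbessel, HBP, HBc, pow_mul]

/-- For `α > 0`, the Hartley–Bessel kernel satisfies `|J_λ(x, α)| ≤ √2` for all `λ, x ∈ ℝ`. -/
theorem hartleyBessel_kernel_bound (a : ℝ) (ha : 0 < a) (lam x : ℝ) :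
    |HBkernel lam x a| ≤ Real.sqrt 2 := by
  have h := HB_energy (a + 1/2) (by linarith) ((lam * x / 2) ^ 2) (by positivity)
  unfold HBkernel
  rw [HBbessel_eq, HBbessel_eq, show a - 1/2 + 1 = a + 1/2 by ring]
  apply Real.abs_le_sqrt
  generalize HBP (a + 1/2) _ = f at *
  generalize HBP (a + 1/2 + 1) _ = g at *
  have e : (lam * x / 2) ^ 2 / (a + 1/2) ^ 2 * g ^ 2 = (lam * x / (2 * a + 1) * g) ^ 2 := by
    have : a + 1/2 ≠ 0 := by positivity
    have : 2 * a + 1 ≠ 0 := by positivity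
    rw [show a + 1/2 = (2 * a + 1) / 2 by ring]
    field_simp
  rw [e] at h
  nlinarith [sq_nonneg (f - lam * x / (2 * a + 1) * g)]
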